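/- In type AIII, let s ∈ p be semisimple, and let Spec±(s) denote the set of classes ±c of elements c ∈ spec(s) under multiplication by −1 (note spec(s) = −spec(s) since s ∈ p). Let γ be a permutation of Spec±(s) ∖ {0} such that m(s,c) = m(s,d) whenever γ(±c) = ±d; extend γ to Spec±(s) by γ(0) = 0. Then there exists k ∈ K with k·g^s·k⁻¹ = g^s and k·(V_{s,c} ⊕ V_{s,−c}) = V_{s,d} ⊕ V_{s,−d} whenever γ(±c) = ±d (in particular k·V_{s,0} = V_{s,0}). -/

import Mathlib

/-! In type AIII, a multiplicity-preserving permutation of the classes `±c` of eigenvalues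
of a semisimple `s ∈ p` is realized by an element of `K` normalizing `g^s`. -/

namespace SymmetricPairAIII

variable {𝕂 : Type*} [Field 𝕂] {N : ℕ}

/-- `gl(V)` for `V = 𝕂^N`. -/
abbrev EndV (𝕂 : Type*) [Field 𝕂] (N : ℕ) := Module.End 𝕂 (Fin N → 𝕂)

/-- Semisimple = diagonalizable: the eigenspaces span `V`. -/
def IsSemisimpleE (x : EndV 𝕂 N) : Prop :=
  (⨆ c : 𝕂, LinearMap.ker (x - c • (1 : EndV 𝕂 N))) = ⊤

/-- The eigenspace `V_{s,c} = ker (s − c·Id)`. -/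
def eigSp (s : EndV 𝕂 N) (c : 𝕂) : Submodule 𝕂 (Fin N → 𝕂) :=
  LinearMap.ker (s - c • (1 : EndV 𝕂 N))

/-- The multiplicity `m(s,c) = dim ker (s − c·Id)`. -/
noncomputable def multE (s : EndV 𝕂 N) (c : 𝕂) : ℕ := Module.finrank 𝕂 (eigSp s c)

/-- The spectrum `spec(s) = {c : m(s,c) > 0}`. -/
def specE (s : EndV 𝕂 N) : Set 𝕂 := {c | 0 < multE s c}

/-- The centralizer `g^s` of `s` in `gl(V)`. -/
def cent (x : EndV 𝕂 N) : Set (EndV 𝕂 N) := {z | z * x = x * z}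

/-- `p = Hom(V_a, V_b) ⊕ Hom(V_b, V_a)`, the `(-1)`-eigenspace of the type AIII involution. -/
def pAIII (Va Vb : Submodule 𝕂 (Fin N → 𝕂)) : Set (EndV 𝕂 N) :=
  {x | Submodule.map x Va ≤ Vb ∧ Submodule.map x Vb ≤ Va}

/-- `K = {g ∈ GL(V) : g V_a = V_a, g V_b = V_b}`. -/
def KAIII (Va Vb : Submodule 𝕂 (Fin N → 𝕂)) : Set (EndV 𝕂 N)ˣ :=
  {g | Submodule.map (g : EndV 𝕂 N) Va = Va ∧ Submodule.map (g : EndV 𝕂 N) Vb = Vb}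

/-- The conjugation action `g.z = g z g⁻¹` of `GL(V)` on `gl(V)`. -/
def conjAct (g : (EndV 𝕂 N)ˣ) (z : EndV 𝕂 N) : EndV 𝕂 N :=
  (g : EndV 𝕂 N) * z * ((g⁻¹ : (EndV 𝕂 N)ˣ) : EndV 𝕂 N)

end SymmetricPairAIII

open SymmetricPairAIII

namespace SymmetricPairAIII

theorem mem_eigSp {𝕂 : Type*} [Field 𝕂] {N : ℕ} (s : EndV 𝕂 N) (c : 𝕂) (v : Fin N → 𝕂) :
    v ∈ eigSp s c ↔ s v = c • v := by
  simp [eigSp, LinearMap.mem_ker, sub_eq_zero]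

theorem exists_eps {𝕂 : Type*} [Field 𝕂] [CharZero 𝕂] {N : ℕ}
    (Va Vb : Submodule 𝕂 (Fin N → 𝕂)) (hVab : IsCompl Va Vb)
    (s : EndV 𝕂 N) (hs : s ∈ pAIII Va Vb) :
    ∃ ε : EndV 𝕂 N, (∀ v, ε (ε v) = v) ∧ (∀ v, ε v = v ↔ v ∈ Va) ∧ (∀ v, ε v = -v ↔ v ∈ Vb) ∧
      ∀ v, s (ε v) = - ε (s v) := by
  let ε : EndV 𝕂 N := LinearMap.ofIsCompl hVab Va.subtype (-Vb.subtype)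
  have ha : ∀ v ∈ Va, ε v = v := fun v hv => by
    simpa using LinearMap.ofIsCompl_apply_left hVab (φ := Va.subtype) (ψ := -Vb.subtype) ⟨v, hv⟩
  have hb : ∀ v ∈ Vb, ε v = -v := fun v hv => by
    simpa using LinearMap.ofIsCompl_apply_right hVab (φ := Va.subtype) (ψ := -Vb.subtype) ⟨v, hv⟩
  have hdec : ∀ v, ∃ a ∈ Va, ∃ b ∈ Vb, a + b = v := fun v => by
    have : v ∈ Va ⊔ Vb := by rw [hVab.sup_eq_top]; trivial
    exact Submodule.mem_sup.1 this
  have h2 : ∀ v : Fin N → 𝕂, v = -v → v = 0 := fun v hv => self_eq_neg.1 hv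
  refine ⟨ε, ?_, ?_, ?_, ?_⟩
  · intro v
    obtain ⟨a, ha', b, hb', rfl⟩ := hdec v
    simp [ha a ha', hb b hb']
  · intro v
    refine ⟨fun h => ?_, ha v⟩
    obtain ⟨a, ha', b, hb', rfl⟩ := hdec v
    rw [map_add, ha a ha', hb b hb'] at h
    have := h2 b (add_left_cancel h).symm
    simpa [this] using ha'
  · intro v
    refine ⟨fun h => ?_, hb v⟩
    obtain ⟨a, ha', b, hb', rfl⟩ := hdec v
    rw [map_add, ha a ha', hb b hb', neg_add] at h
    have := h2 a (add_right_cancel h)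
    simpa [this] using hb'
  · intro v
    obtain ⟨a, ha', b, hb', rfl⟩ := hdec v
    have h1 : s a ∈ Vb := hs.1 ⟨a, ha', rfl⟩
    have h2 : s b ∈ Va := hs.2 ⟨b, hb', rfl⟩
    simp [ha a ha', hb b hb', ha _ h2, hb _ h1]
    abel

theorem exists_glue {𝕂 : Type*} [Field 𝕂] {N : ℕ} (s : EndV 𝕂 N) (hss : IsSemisimpleE s)
    (φ : 𝕂 → EndV 𝕂 N) : ∃ k : EndV 𝕂 N, ∀ c, ∀ v ∈ eigSp s c, k v = φ c v := by
  classical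
  have hA : eigSp s = fun c => Module.End.eigenspace s c := by
    funext c; ext v; rw [mem_eigSp, Module.End.mem_eigenspace_iff]
  have hint : DirectSum.IsInternal (eigSp s) := by
    apply DirectSum.isInternal_submodule_of_iSupIndep_of_iSup_eq_top
    · rw [hA]; exact Module.End.eigenspaces_iSupIndep s
    · exact hss
  let e := LinearEquiv.ofBijective (DirectSum.coeLinearMap (eigSp s)) hint
  refine ⟨(DirectSum.toModule 𝕂 𝕂 _ (fun c => (φ c) ∘ₗ (eigSp s c).subtype)) ∘ₗ
    e.symm.toLinearMap, fun c v hv => ?_⟩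
  have : e.symm v = DirectSum.lof 𝕂 𝕂 (fun c => eigSp s c) c ⟨v, hv⟩ := by
    rw [LinearEquiv.symm_apply_eq]
    exact (DirectSum.coeLinearMap_lof (eigSp s) c ⟨v, hv⟩).symm
  simp only [LinearMap.comp_apply, LinearEquiv.coe_coe, this]
  rw [DirectSum.toModule_lof]; rfl

theorem eig_induction {𝕂 : Type*} [Field 𝕂] {N : ℕ} (s : EndV 𝕂 N) (hss : IsSemisimpleE s)
    (f g : EndV 𝕂 N) (h : ∀ c ∈ specE s, ∀ v ∈ eigSp s c, f v = g v) : f = g := by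
  have : (⊤ : Submodule 𝕂 (Fin N → 𝕂)) ≤ LinearMap.eqLocus f g := by
    rw [← hss]
    refine iSup_le fun c v hv => ?_
    by_cases hc : c ∈ specE s
    · exact h c hc v hv
    · have h0 : eigSp s c = ⊥ := by
        apply Submodule.finrank_eq_zero.1
        simpa [specE, multE] using hc
      have hv' : v ∈ eigSp s c := hv
      rw [h0, Submodule.mem_bot] at hv'
      simp [hv']
  refine LinearMap.ext fun v => ?_
  exact this (Submodule.mem_top (x := v))

theorem mem_cent_iff {𝕂 : Type*} [Field 𝕂] {N : ℕ} (s : EndV 𝕂 N) (hss : IsSemisimpleE s)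
    (z : EndV 𝕂 N) : z ∈ cent s ↔ ∀ c ∈ specE s, ∀ v ∈ eigSp s c, z v ∈ eigSp s c := by
  constructor
  · intro h c _ v hv
    have h' : z (s v) = s (z v) := LinearMap.congr_fun h v
    rw [mem_eigSp] at hv ⊢
    rw [← h', hv, map_smul]
  · intro h
    refine eig_induction s hss _ _ fun c hc v hv => ?_
    have h1 := (mem_eigSp s c _).1 (h c hc v hv)
    have h2 := (mem_eigSp s c _).1 hv
    simp [Module.End.mul_apply, h1, h2]

end SymmetricPairAIII

/-- The permutation of `Spec±(s) ∖ {0}` is encoded by an odd map `γ` on `spec(s)` fixing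
`0`, bijective on `spec(s)` and preserving multiplicities. -/
theorem K_realizes_permutation_of_pm_classes_typeAIII {𝕂 : Type*} [Field 𝕂]
    [IsAlgClosed 𝕂] [CharZero 𝕂] {N : ℕ}
    (Va Vb : Submodule 𝕂 (Fin N → 𝕂)) (hVab : IsCompl Va Vb)
    (s : EndV 𝕂 N) (hs : s ∈ pAIII Va Vb) (hss : IsSemisimpleE s)
    (γ : 𝕂 → 𝕂) (hγ0 : γ 0 = 0)
    (hγbij : Set.BijOn γ (specE s) (specE s))
    (hγodd : ∀ c ∈ specE s, γ (-c) = -(γ c))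
    (hγmult : ∀ c ∈ specE s, multE s (γ c) = multE s c) :
    ∃ k : (EndV 𝕂 N)ˣ, k ∈ KAIII Va Vb ∧
      conjAct k '' cent s = cent s ∧
      ∀ c ∈ specE s,
        Submodule.map (k : EndV 𝕂 N) (eigSp s c ⊔ eigSp s (-c)) =
          eigSp s (γ c) ⊔ eigSp s (-(γ c)) := by
  obtain ⟨ε, hεε, hεa, hεb, hεs⟩ := exists_eps Va Vb hVab s hs
  -- `ε` swaps the eigenspaces for `c` and `-c`
  have hεV : ∀ c, ∀ v ∈ eigSp s c, ε v ∈ eigSp s (-c) := by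
    intro c v hv
    rw [mem_eigSp] at hv ⊢
    rw [hεs, hv, map_smul, neg_smul]
  have hεmap : ∀ c, Submodule.map ε (eigSp s c) = eigSp s (-c) := by
    intro c
    apply le_antisymm
    · rintro _ ⟨v, hv, rfl⟩
      exact hεV c v hv
    · intro v hv
      exact ⟨ε v, by simpa using hεV _ v hv, hεε v⟩
  have hεinj : Function.Injective ε := fun a b h => by rw [← hεε a, h, hεε]
  have hneg : ∀ c ∈ specE s, -c ∈ specE s := by
    intro c hc
    have h1 : multE s (-c) = multE s c := by
      unfold multE
      rw [← hεmap c]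
      exact (Submodule.equivMapOfInjective ε hεinj (eigSp s c)).finrank_eq.symm
    change 0 < multE s (-c)
    rw [h1]; exact hc
  -- arbitrary isomorphisms between the eigenspaces
  have hf : ∀ c, ∃ f : EndV 𝕂 N, c ∈ specE s →
      Submodule.map f (eigSp s c) = eigSp s (γ c) ∧ (c = 0 → f = 1) := by
    intro c
    by_cases hc0 : c = 0
    · subst hc0
      refine ⟨1, fun _ => ⟨?_, fun _ => rfl⟩⟩
      rw [hγ0]; exact Submodule.map_id _
    · by_cases hc : c ∈ specE s
      · have e : eigSp s c ≃ₗ[𝕂] eigSp s (γ c) :=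
          LinearEquiv.ofFinrankEq _ _ (hγmult c hc).symm
        obtain ⟨g, hg⟩ := LinearMap.exists_extend ((eigSp s (γ c)).subtype ∘ₗ e.toLinearMap)
        have hg' : ∀ v (hv : v ∈ eigSp s c), g v = e ⟨v, hv⟩ := fun v hv =>
          LinearMap.congr_fun hg ⟨v, hv⟩
        refine ⟨g, fun _ => ⟨le_antisymm ?_ ?_, fun h => absurd h hc0⟩⟩
        · rintro _ ⟨v, hv, rfl⟩
          rw [hg' v hv]; exact (e ⟨v, hv⟩).2
        · intro w hw
          refine ⟨e.symm ⟨w, hw⟩, (e.symm ⟨w, hw⟩).2, ?_⟩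
          rw [hg' _ (e.symm ⟨w, hw⟩).2]; simp
      · exact ⟨0, fun h => absurd h hc⟩
  choose f hf using hf
  -- a choice of sign
  obtain ⟨σ, hσ1, hσ2⟩ : ∃ σ : 𝕂 → 𝕂, (∀ c, σ (-c) = σ c) ∧ ∀ c, σ c = c ∨ σ c = -c := by
    refine ⟨fun c => Function.invFun (fun x : 𝕂 => x ^ 2) (c ^ 2), fun c => by simp, fun c => ?_⟩
    apply sq_eq_sq_iff_eq_or_eq_neg.1
    exact Function.invFun_eq (f := fun x : 𝕂 => x ^ 2) ⟨c, rfl⟩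
  classical
  let φ : 𝕂 → EndV 𝕂 N := fun c => if σ c = c then f c else ε ∘ₗ f (-c) ∘ₗ ε
  have hφmap : ∀ c ∈ specE s, Submodule.map (φ c) (eigSp s c) = eigSp s (γ c) := by
    intro c hc
    by_cases h : σ c = c
    · simp only [φ, if_pos h]; exact (hf c hc).1
    · simp only [φ, if_neg h]
      rw [Submodule.map_comp, Submodule.map_comp, hεmap, (hf _ (hneg c hc)).1, hεmap,
        hγodd c hc, neg_neg]
  have hφε : ∀ c ∈ specE s, ∀ v, φ (-c) (ε v) = ε (φ c v) := by
    intro c hc v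
    by_cases hc0 : c = 0
    · subst hc0
      have h0 : φ 0 = 1 := by
        have : σ 0 = 0 := by simpa using hσ2 0
        simp only [φ, if_pos this]; exact (hf 0 hc).2 rfl
      rw [neg_zero, h0]; rfl
    · have hne : c ≠ -c := fun h => hc0 (self_eq_neg.1 h)
      rcases hσ2 c with h | h
      · have h' : ¬ σ (-c) = -c := by rw [hσ1, h]; exact hne
        simp only [φ, if_pos h, if_neg h', LinearMap.comp_apply, hεε, neg_neg]
      · have h' : σ (-c) = -c := by rw [hσ1, h]
        have h'' : ¬ σ c = c := by rw [h]; exact fun h => hne h.symm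
        simp only [φ, if_pos h', if_neg h'', LinearMap.comp_apply, hεε]
  obtain ⟨k, hk⟩ := exists_glue s hss φ
  have hkmap : ∀ c ∈ specE s, Submodule.map k (eigSp s c) = eigSp s (γ c) := by
    intro c hc
    rw [← hφmap c hc]
    ext w
    constructor
    · rintro ⟨v, hv, rfl⟩; exact ⟨v, hv, (hk c v hv).symm⟩
    · rintro ⟨v, hv, rfl⟩; exact ⟨v, hv, hk c v hv⟩
  have hkε : ∀ v, k (ε v) = ε (k v) := by
    have : k * ε = ε * k := by
      refine eig_induction s hss _ _ fun c hc v hv => ?_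
      simp only [Module.End.mul_apply]
      rw [hk c v hv, hk (-c) _ (hεV c v hv), hφε c hc]
    exact fun v => LinearMap.congr_fun this v
  have hsurj : LinearMap.range k = ⊤ := by
    rw [eq_top_iff, ← hss]
    refine iSup_le fun c v hv => ?_
    by_cases hc : c ∈ specE s
    · obtain ⟨d, hd, rfl⟩ := hγbij.surjOn hc
      have hv' : v ∈ eigSp s (γ d) := hv
      rw [← hkmap d hd] at hv'
      obtain ⟨w, _, rfl⟩ := hv'
      exact ⟨w, rfl⟩
    · have h0 : eigSp s c = ⊥ := by
        apply Submodule.finrank_eq_zero.1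
        simpa [specE, multE] using hc
      have hv' : v ∈ eigSp s c := hv
      rw [h0, Submodule.mem_bot] at hv'
      simp [hv']
  have hku : IsUnit k := LinearMap.isUnit_iff_range_eq_top _ |>.2 hsurj
  obtain ⟨u, rfl⟩ := hku
  have hui : ∀ v, (u : EndV 𝕂 N) ((u⁻¹ : (EndV 𝕂 N)ˣ).1 v) = v := fun v =>
    LinearMap.congr_fun u.mul_inv v
  have hiu : ∀ v, (u⁻¹ : (EndV 𝕂 N)ˣ).1 ((u : EndV 𝕂 N) v) = v := fun v =>
    LinearMap.congr_fun u.inv_mul v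
  have hiε : ∀ v, (u⁻¹ : (EndV 𝕂 N)ˣ).1 (ε v) = ε ((u⁻¹ : (EndV 𝕂 N)ˣ).1 v) := fun v => by
    conv_lhs => rw [← hui v, ← hkε, hiu]
  have hinv : ∀ c ∈ specE s, ∀ v ∈ eigSp s (γ c), (u⁻¹ : (EndV 𝕂 N)ˣ).1 v ∈ eigSp s c := by
    intro c hc v hv
    rw [← hkmap c hc] at hv
    obtain ⟨w, hw, rfl⟩ := hv
    rw [hiu]; exact hw
  have hfwd : ∀ c ∈ specE s, ∀ v ∈ eigSp s c, (u : EndV 𝕂 N) v ∈ eigSp s (γ c) := by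
    intro c hc v hv
    rw [← hkmap c hc]; exact ⟨v, hv, rfl⟩
  refine ⟨u, ⟨le_antisymm ?_ ?_, le_antisymm ?_ ?_⟩, ?_, ?_⟩
  · rintro _ ⟨v, hv, rfl⟩
    rw [← hεa, ← hkε, (hεa v).2 hv]
  · intro v hv
    exact ⟨(u⁻¹ : (EndV 𝕂 N)ˣ).1 v, (hεa _).1 (by rw [← hiε, (hεa v).2 hv]), hui v⟩
  · rintro _ ⟨v, hv, rfl⟩
    rw [← hεb, ← hkε, (hεb v).2 hv, map_neg]
  · intro v hv
    exact ⟨(u⁻¹ : (EndV 𝕂 N)ˣ).1 v, (hεb _).1 (by rw [← hiε, (hεb v).2 hv, map_neg]), hui v⟩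
  · ext z
    constructor
    · rintro ⟨y, hy, rfl⟩
      rw [mem_cent_iff s hss] at hy ⊢
      intro c hc v hv
      obtain ⟨d, hd, rfl⟩ := hγbij.surjOn hc
      exact hfwd d hd _ (hy d hd _ (hinv d hd v hv))
    · intro hz
      refine ⟨(u⁻¹ : (EndV 𝕂 N)ˣ).1 * z * u, ?_, ?_⟩
      · rw [mem_cent_iff s hss] at hz ⊢
        intro c hc v hv
        exact hinv c hc _ (hz _ (hγbij.mapsTo hc) _ (hfwd c hc v hv))
      · simp [conjAct, mul_assoc]
  · intro c hc
    rw [Submodule.map_sup, hkmap c hc, hkmap _ (hneg c hc), hγodd c hc]
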